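/- Let α ≤ β ≤ −1 be negative integers and let M = (M_i)_{i≥0} be real parameters with M_i ∉ {0,1}. Then for every integer f with ⌈(−α−β)/2⌉ ≤ f ≤ −α−1, P̂_f^{α,β;M}(x) = lim_{s→0} (1/s)·[ P_f^{α−s,β}(x) − (P_f^{α−s,β}(1)/P_{−f−α−β−1}^{α−s,β}(1)) · P_{−f−α−β−1}^{α−s,β}(x) ], the limit existing for every x (here s → 0 through values for which P_{−f−α−β−1}^{α−s,β}(1) ≠ 0). -/

import Mathlib

open Finset MeasureTheory

noncomputable section ExceptionalHahnJacobi

/-- Pochhammer symbol `(z)_m = z (z+1) ⋯ (z+m-1)`. -/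
def poch (z : ℝ) (m : ℕ) : ℝ := ∏ i ∈ Finset.range m, (z + (i : ℝ))

/-- Pochhammer symbol with integer exponent; `(z)_{-k} = 1 / ((z-1)(z-2)⋯(z-k))`. -/
def pochZ (z : ℝ) (m : ℤ) : ℝ :=
  if 0 ≤ m then poch z m.toNat else 1 / poch (z - ((-m).toNat : ℝ)) (-m).toNat

/-- Generalized binomial coefficient `C(z, k) = z(z-1)⋯(z-k+1)/k!`. -/
def genBinom (z : ℝ) (k : ℕ) : ℝ := (∏ i ∈ Finset.range k, (z - (i : ℝ))) / (k.factorial : ℝ)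

/-- `λ^{a,b}(x) = x (x + a + b + 1)`. -/
def lam (a b x : ℝ) : ℝ := x * (x + a + b + 1)

/-- Hahn polynomial `h_n^{a,b,N}(x)`. -/
def hahn (a b N : ℝ) (n : ℕ) (x : ℝ) : ℝ :=
  ∑ j ∈ Finset.range (n + 1),
    poch (-(n : ℝ)) j * poch (a + b + (n : ℝ) + 1) j * poch (-N + (j : ℝ)) (n - j) *
      poch (a + (j : ℝ) + 1) (n - j) * poch (-x) j / (j.factorial : ℝ)

/-- Dual Hahn polynomial `R_n^{a,b,N}(x)`. -/
def dualHahn (a b N : ℝ) (n : ℕ) (x : ℝ) : ℝ :=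
  ∑ j ∈ Finset.range (n + 1),
    poch (-(n : ℝ)) j * poch (-N + (j : ℝ)) (n - j) * poch (a + (j : ℝ) + 1) (n - j) /
        ((n.factorial : ℝ) * (-1 : ℝ) ^ j * (j.factorial : ℝ)) *
      ∏ i ∈ Finset.range j, (x - (i : ℝ) * (a + b + 1 + (i : ℝ)))

/-- Dual Hahn polynomial with integer degree; zero for negative degree. -/
def dualHahnZ (a b N : ℝ) (m : ℤ) (x : ℝ) : ℝ :=
  if 0 ≤ m then dualHahn a b N m.toNat x else 0

/-- Jacobi polynomial `P_n^{a,b}(x)`. -/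
def jacobiP (a b : ℝ) (n : ℕ) (x : ℝ) : ℝ :=
  (2 : ℝ)⁻¹ ^ n * ∑ j ∈ Finset.range (n + 1),
    genBinom ((n : ℝ) + a) j * genBinom ((n : ℝ) + b) (n - j) * (x - 1) ^ (n - j) * (x + 1) ^ j

/-- The function `φ_u^{α,β,N}(s,x)`, a normalized terminating ₃F₂. -/
def phiH (α β : ℤ) (N : ℝ) (u : ℕ) (s x : ℝ) : ℝ :=
  poch ((α : ℝ) + 1) (max u (-α - β - (u : ℤ) - 1).toNat) *
    poch (-N) (max u (-α - β - (u : ℤ) - 1).toNat) *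
    ∑ j ∈ Finset.range (u + 1),
      poch (-(u : ℝ)) j * poch ((u : ℝ) - s + (α : ℝ) + (β : ℝ) + 1) j * poch (-x) j /
        (poch ((α : ℝ) - s + 1) j * poch (-N) j * (j.factorial : ℝ))

/-- The polynomials `Ĥ_n^{α,β,N;M}(x)`. -/
def Hhat (α β : ℤ) (N : ℝ) (M : ℕ → ℝ) (n : ℕ) (x : ℝ) : ℝ :=
  if ⌈((-α - β : ℤ) : ℚ) / 2⌉ ≤ (n : ℤ) ∧ (n : ℤ) ≤ -α - 1 then
    deriv (fun s => phiH α β N n s x) 0 -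
      deriv (fun s => phiH α β N (-α - β - (n : ℤ) - 1).toNat s x) 0
  else if -α ≤ (n : ℤ) ∧ (n : ℤ) ≤ -α - β - 1 then
    (-1 : ℝ) ^ ((β : ℤ) + (n : ℤ)) * ((β + (n : ℤ)).toNat.factorial : ℝ) *
      (((-α - β - (n : ℤ) - 1).toNat.factorial : ℝ) * poch (-x) (-α).toNat *
          hahn (-(α : ℝ)) (β : ℝ) ((α : ℝ) + N) ((α + (n : ℤ)).toNat) (x + (α : ℝ)) +
        (((α + (n : ℤ)).toNat.factorial : ℝ)) *
            poch (-N - (α : ℝ) - (β : ℝ) - (n : ℝ) - 1) (2 * (n : ℤ) + α + β + 1).toNat /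
            (M ((α + (n : ℤ)).toNat) - 1) *
          hahn (α : ℝ) (β : ℝ) N ((-α - β - (n : ℤ) - 1).toNat) x)
  else hahn (α : ℝ) (β : ℝ) N n x

/-- The function `φ_u^{α,β}(s,x)`, a normalized terminating ₂F₁. -/
def phiJ (α β : ℤ) (u : ℕ) (s x : ℝ) : ℝ :=
  poch ((α : ℝ) + 1) (max u (-α - β - (u : ℤ) - 1).toNat) /
      ((max u.factorial (-α - β - (u : ℤ) - 1).toNat.factorial : ℕ) : ℝ) *
    ∑ j ∈ Finset.range (u + 1),
      poch (-(u : ℝ)) j * poch ((u : ℝ) - s + (α : ℝ) + (β : ℝ) + 1) j /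
          (poch ((α : ℝ) - s + 1) j * (j.factorial : ℝ)) * ((1 - x) / 2) ^ j

/-- The polynomials `P̂_n^{α,β;M}(x)`. -/
def Phat (α β : ℤ) (M : ℕ → ℝ) (n : ℕ) (x : ℝ) : ℝ :=
  if ⌈((-α - β : ℤ) : ℚ) / 2⌉ ≤ (n : ℤ) ∧ (n : ℤ) ≤ -α - 1 then
    deriv (fun s => phiJ α β n s x) 0 -
      deriv (fun s => phiJ α β (-α - β - (n : ℤ) - 1).toNat s x) 0
  else if -α ≤ (n : ℤ) ∧ (n : ℤ) ≤ -α - β - 1 then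
    (-1 : ℝ) ^ ((β : ℤ) + (n : ℤ)) *
      ((((n : ℤ) + α).toNat.factorial : ℝ) * (((n : ℤ) + β).toNat.factorial : ℝ) *
        ((-α - β - (n : ℤ) - 1).toNat.factorial : ℝ)) / (n.factorial : ℝ) *
      ((M ((α + (n : ℤ)).toNat) - 1)⁻¹ * jacobiP (α : ℝ) (β : ℝ) ((-α - β - (n : ℤ) - 1).toNat) x +
        ((1 - x) / 2) ^ (-α).toNat * jacobiP (-(α : ℝ)) (β : ℝ) ((α + (n : ℤ)).toNat) x)
  else jacobiP (α : ℝ) (β : ℝ) n x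

/-- `u_F = Σ_{f ∈ F} f - C(n_F + 1, 2)`. -/
def uF (F : Finset ℕ) : ℕ := (∑ f ∈ F, f) - (F.card + 1).choose 2

/-- `n ∈ σ_F = {u_F, u_F + 1, …} \ {u_F + f : f ∈ F}`. -/
def inSigma (F : Finset ℕ) (n : ℕ) : Prop := uF F ≤ n ∧ n - uF F ∉ F

/-- The `i`-th element of `F` in increasing order. -/
def elemOf (F : Finset ℕ) (i : Fin F.card) : ℕ := ((F.orderIsoOfFin rfl i : {x // x ∈ F}) : ℕ)

/-- The `i`-th element of a finite set of integers, in increasing order. -/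
def elemOfZ (S : Finset ℤ) (i : Fin S.card) : ℤ := ((S.orderIsoOfFin rfl i : {x // x ∈ S}) : ℤ)

/-- Exceptional Hahn polynomial `h_n^{α,β,N;M,F}(x)`. -/
def exHahn (α β : ℤ) (N : ℝ) (M : ℕ → ℝ) (F : Finset ℕ) (n : ℕ) (x : ℝ) : ℝ :=
  Matrix.det (Matrix.of fun i j : Fin (F.card + 1) =>
    Fin.cases (Hhat α β N M (n - uF F) (x + ((j : ℕ) : ℝ)))
      (fun k => Hhat α β N M (elemOf F k) (x + ((j : ℕ) : ℝ))) i)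

/-- The polynomial `Ω_{M,F}^{α,β,N}(x)`. -/
def OmegaH (α β : ℤ) (N : ℝ) (M : ℕ → ℝ) (F : Finset ℕ) (x : ℝ) : ℝ :=
  Matrix.det (Matrix.of fun i j : Fin F.card =>
    Hhat α β N M (elemOf F i) (x + ((j : ℕ) : ℝ)))

/-- The polynomial `Λ_{M,F}^{α,β,N}(x)` (columns `j ∈ {1,…,n_F+1}`, `j ≠ n_F`). -/
def LambdaH (α β : ℤ) (N : ℝ) (M : ℕ → ℝ) (F : Finset ℕ) (x : ℝ) : ℝ :=
  Matrix.det (Matrix.of fun i j : Fin F.card =>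
    Hhat α β N M (elemOf F i)
      (x + ((if (j : ℕ) = F.card - 1 then F.card else (j : ℕ) : ℕ) : ℝ)))

/-- Exceptional Jacobi polynomial `P_n^{α,β;M,F}(x)`. -/
def exJacobi (α β : ℤ) (M : ℕ → ℝ) (F : Finset ℕ) (n : ℕ) (x : ℝ) : ℝ :=
  Matrix.det (Matrix.of fun i j : Fin (F.card + 1) =>
    Fin.cases (iteratedDeriv (j : ℕ) (Phat α β M (n - uF F)) x)
      (fun k => iteratedDeriv (j : ℕ) (Phat α β M (elemOf F k)) x) i)

/-- The polynomial `Ω_{M,F}^{α,β}(x)`. -/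
def OmegaJ (α β : ℤ) (M : ℕ → ℝ) (F : Finset ℕ) (x : ℝ) : ℝ :=
  Matrix.det (Matrix.of fun i j : Fin F.card =>
    iteratedDeriv (j : ℕ) (Phat α β M (elemOf F i)) x)

/-- `F_ext = F \ {-β, …, -α-β-1}`. -/
def Fext (α β : ℤ) (F : Finset ℕ) : Finset ℕ :=
  F.filter fun f : ℕ => ((f : ℤ) < -β ∨ -α - β ≤ (f : ℤ))

/-- Admissibility of the data `α, β, M, F`. -/
def IsAdmissible (α β : ℤ) (M : ℕ → ℝ) (F : Finset ℕ) : Prop :=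
  (∀ i : ℕ, (i : ℤ) ≤ -β - 1 → (∀ f ∈ F, (i : ℤ) ≠ -β - (f : ℤ) - 1) →
      Real.sign (M i) =
        Real.sign (∏ f ∈ Fext α β F, (((i : ℝ) - (f : ℝ) - (α : ℝ)) * ((i : ℝ) + (f : ℝ) + (β : ℝ) + 1)))) ∧
  (∀ x : ℤ, 0 ≤ x → (∃ f ∈ F, x ≤ (f : ℤ) + α + β) →
      0 ≤ ∏ f ∈ F.filter (fun f : ℕ => -α - β ≤ (f : ℤ)), (x - (f : ℤ) - α - β))

/-- `U_{F-} = {f + α + β : f ∈ F, 1 ≤ f ≤ -β-1}`. -/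
def UFm (α β : ℤ) (F : Finset ℕ) : Finset ℤ :=
  (F.filter fun f : ℕ => (1 ≤ f ∧ (f : ℤ) ≤ -β - 1)).image fun f : ℕ => (f : ℤ) + α + β

/-- `U_{F+} = {f + α + β : f ∈ F, f ≥ -α-β}`. -/
def UFp (α β : ℤ) (F : Finset ℕ) : Finset ℤ :=
  (F.filter fun f : ℕ => -α - β ≤ (f : ℤ)).image fun f : ℕ => (f : ℤ) + α + β

/-- `U_F = U_{F-} ∪ U_{F+}`. -/
def UF (α β : ℤ) (F : Finset ℕ) : Finset ℤ := UFm α β F ∪ UFp α β F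

/-- The weight of the measure `ω_{α,β,N}^{M,F}` at the point `x`. -/
def wH (α β : ℤ) (N : ℕ) (M : ℕ → ℝ) (F : Finset ℕ) (x : ℕ) : ℝ :=
  genBinom ((α : ℝ) + (F.card : ℝ) + (x : ℝ)) x *
      genBinom ((β : ℝ) + (N : ℝ) - (x : ℝ)) (N - F.card - x) /
    (OmegaH α β (N : ℝ) M F (x : ℝ) * OmegaH α β (N : ℝ) M F ((x : ℝ) + 1))

/-- The weight `ω_{α,β;M,F}(x)` on `[-1,1]`. -/
def wJ (α β : ℤ) (M : ℕ → ℝ) (F : Finset ℕ) (x : ℝ) : ℝ :=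
  (1 - x) ^ (α + (F.card : ℤ)) * (1 + x) ^ (β + (F.card : ℤ)) / (OmegaJ α β M F x) ^ 2

/-- The measure on `[-1,1]` with density `ω_{α,β;M,F}`. -/
def jacobiMeasure (α β : ℤ) (M : ℕ → ℝ) (F : Finset ℕ) : Measure ℝ :=
  (volume.restrict (Set.Icc (-1 : ℝ) 1)).withDensity fun x => ENNReal.ofReal (wJ α β M F x)

/-- Mass of the dual Hahn measure `ρ_{b,a,N̂}` at `λ^{a,b}(x)`. -/
def rhoMass (a b Nh : ℤ) (x : ℕ) : ℝ :=
  (2 * (x : ℝ) + (a : ℝ) + (b : ℝ) + 1) * poch ((b : ℝ) + 1) x * poch (-(Nh : ℝ)) x *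
      (Nh.toNat.factorial : ℝ) /
    ((-1 : ℝ) ^ x * poch ((x : ℝ) + (a : ℝ) + (b : ℝ) + 1) (Nh + 1).toNat *
      poch ((a : ℝ) + 1) x * (x.factorial : ℝ))

/-- Mass of the measure `ν_{a,b,N̂}^{M}` at `λ^{a,b}(s)`. -/
def nuMass (a b Nh : ℤ) (M : ℕ → ℝ) (s : ℤ) : ℝ :=
  if -b ≤ s ∧ s ≤ -1 then
    (2 * (s : ℝ) + (a : ℝ) + (b : ℝ) + 1) * poch ((Nh : ℝ) + 1 - (s : ℝ)) (s + b).toNat /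
        poch ((Nh : ℝ) + (b : ℝ) + 1) (s + a + 1).toNat * M ((s + b).toNat)
  else if 0 ≤ s ∧ s ≤ Nh then
    poch ((Nh : ℝ) + 1) b.toNat ^ 2 / poch ((b : ℝ) + 1) (a - b).toNat * rhoMass a b Nh s.toNat /
      ∏ i ∈ Finset.range b.toNat, (((s : ℝ) + (a : ℝ) + (i : ℝ) + 1) * ((s : ℝ) + (b : ℝ) - (i : ℝ)))
  else 0

/-- `ζ_v` (defined for any integer `v` via `pochZ`). -/
def zetaH (α β : ℤ) (N : ℝ) (v : ℤ) : ℝ :=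
  pochZ (-N - (α : ℝ) - (β : ℝ)) v * poch ((v : ℝ) + 1) (-α).toNat *
    ((v - α - β).toNat.factorial : ℝ)

/-- `θ_v^M`. -/
def thetaM (β : ℤ) (M : ℕ → ℝ) (v : ℕ) : ℝ :=
  if (v : ℤ) ≤ -β - 1 then 1 - M ((-β - 1 - (v : ℤ)).toNat) else 1

/-- `τ_v = ∏_{u ∈ U_F} (λ^{a,b}(v+α+β) - λ^{a,b}(u))` with `a = -α`, `b = -β`. -/
def tauH (α β : ℤ) (F : Finset ℕ) (v : ℕ) : ℝ :=
  ∏ u ∈ UF α β F,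
    (lam ((-α : ℤ) : ℝ) ((-β : ℤ) : ℝ) ((v : ℝ) + (α : ℝ) + (β : ℝ)) -
      lam ((-α : ℤ) : ℝ) ((-β : ℤ) : ℝ) ((u : ℤ) : ℝ))

/-- `ξ_n`. -/
def xiH (α β : ℤ) (N : ℝ) (F : Finset ℕ) (n : ℕ) : ℝ :=
  pochZ (N - (n : ℝ) + 1) ((n : ℤ) + α + β) ^ (α + (F.card : ℤ) + 1) *
    ∏ j ∈ Finset.range (F.card + 1), poch (N - (n : ℝ) - (j : ℝ) + 1) j

/-- `κ_M`. -/
def kappaM (α β : ℤ) (N : ℝ) (M : ℕ → ℝ) (F : Finset ℕ) : ℝ :=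
  (∏ u ∈ UFm α β F, (1 - M ((-u + α - 1).toNat))) * ∏ u ∈ UF α β F, zetaH α β N u

/-- Entry `(i,j)` (0-based) of the determinant defining `q_n^{a,b,N̂;M,U_F}`. -/
def qEntry (α β : ℤ) (N : ℝ) (M : ℕ → ℝ) (F : Finset ℕ) (n : ℕ) (x : ℝ) (i j : ℕ) : ℝ :=
  if i = 0 then
    (-1 : ℝ) ^ j * dualHahnZ (((-α).toNat : ℝ)) (((-β).toNat : ℝ)) (N + (α : ℝ) + (β : ℝ))
      ((n : ℤ) - (-α).toNat + j) x
  else if h1 : i - 1 < (UFm α β F).card then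
    (-1 : ℝ) ^ j * dualHahnZ (((-α).toNat : ℝ)) (((-β).toNat : ℝ)) (N + (α : ℝ) + (β : ℝ))
      ((n : ℤ) - (-α).toNat + j)
      (lam (((-α).toNat : ℝ)) (((-β).toNat : ℝ)) ((elemOfZ (UFm α β F) ⟨i - 1, h1⟩ : ℤ) : ℝ))
  else if i - 1 - (UFm α β F).card < (-α).toNat then
    poch (((-α).toNat : ℝ) + ((-β).toNat : ℝ) + (N + (α : ℝ) + (β : ℝ)) - (n : ℝ) - (j : ℝ) + 1) j *
      Hhat α β (-2 - (N + (α : ℝ) + (β : ℝ))) M ((-β).toNat + (i - 1 - (UFm α β F).card))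
        (-(n : ℝ) + ((-α).toNat : ℝ) - (j : ℝ) - 1)
  else if h3 : i - 1 - (UFm α β F).card - (-α).toNat < (UFp α β F).card then
    (-1 : ℝ) ^ j * dualHahnZ (((-α).toNat : ℝ)) (((-β).toNat : ℝ)) (N + (α : ℝ) + (β : ℝ))
      ((n : ℤ) - (-α).toNat + j)
      (lam (((-α).toNat : ℝ)) (((-β).toNat : ℝ))
        ((elemOfZ (UFp α β F) ⟨i - 1 - (UFm α β F).card - (-α).toNat, h3⟩ : ℤ) : ℝ))
  else 0

/-- The Krall dual Hahn orthogonal polynomial `q_n^{a,b,N̂;M,U_F}(x)`. -/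
def qKrall (α β : ℤ) (N : ℝ) (M : ℕ → ℝ) (F : Finset ℕ) (n : ℕ) (x : ℝ) : ℝ :=
  Matrix.det (Matrix.of fun i j : Fin (1 + (UFm α β F).card + (-α).toNat + (UFp α β F).card) =>
      qEntry α β N M F n x (i : ℕ) (j : ℕ)) /
    ((-1 : ℝ) ^ ((n + (-α).toNat + (-β).toNat) * ((UF α β F).card + 1) +
        ((-α).toNat + (-β).toNat).choose 2 + ((-β).toNat).choose 2 + (-α).toNat) *
      ∏ u ∈ UF α β F, (x - lam (((-α).toNat : ℝ)) (((-β).toNat : ℝ)) ((u : ℤ) : ℝ)))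

/-- Row used in the renormalized determinant `P̄`: for `-α ≤ g ≤ -α-β-1` it is
`(M_{α+g} - 1) · P̂_g` written without the division by `M_{α+g} - 1`. -/
def PhatBarRow (α β : ℤ) (M : ℕ → ℝ) (g : ℕ) (x : ℝ) : ℝ :=
  if -α ≤ (g : ℤ) ∧ (g : ℤ) ≤ -α - β - 1 then
    (-1 : ℝ) ^ ((β : ℤ) + (g : ℤ)) *
      ((((g : ℤ) + α).toNat.factorial : ℝ) * (((g : ℤ) + β).toNat.factorial : ℝ) *
        ((-α - β - (g : ℤ) - 1).toNat.factorial : ℝ)) / (g.factorial : ℝ) *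
      (jacobiP (α : ℝ) (β : ℝ) ((-α - β - (g : ℤ) - 1).toNat) x +
        (M ((α + (g : ℤ)).toNat) - 1) * ((1 - x) / 2) ^ (-α).toNat *
          jacobiP (-(α : ℝ)) (β : ℝ) ((α + (g : ℤ)).toNat) x)
  else Phat α β M g x

/-- The renormalized exceptional Jacobi polynomial
`P̄_n^{α,β;M,F} = (∏_{i=0}^{-β-1} (M_i - 1)) · P_n^{α,β;M,F}`
(written so that the factors `M_i - 1` are distributed into the corresponding rows of the
determinant; this agrees with the product formula whenever all `M_i ≠ 1`). -/
def Pbar (α β : ℤ) (M : ℕ → ℝ) (F : Finset ℕ) (n : ℕ) (x : ℝ) : ℝ :=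
  (∏ i ∈ (Finset.range (-β).toNat).filter
      (fun i : ℕ => (((i : ℤ) - α).toNat ∉ F ∧ ((i : ℤ) - α).toNat ≠ n - uF F)), (M i - 1)) *
    Matrix.det (Matrix.of fun r j : Fin (F.card + 1) =>
      Fin.cases (iteratedDeriv (j : ℕ) (PhatBarRow α β M (n - uF F)) x)
        (fun k => iteratedDeriv (j : ℕ) (PhatBarRow α β M (elemOf F k)) x) r)

end ExceptionalHahnJacobi

lemma genBinom_eq_choose (z : ℝ) (k : ℕ) : genBinom z k = Ring.choose z k := by
  have h := Ring.descPochhammer_eq_factorial_smul_choose z k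
  have h2 : (descPochhammer ℤ k).smeval z = ∏ i ∈ Finset.range k, (z - (i : ℝ)) := by
    rw [← descPochhammer_eval_eq_prod_range, ← descPochhammer_map (Int.castRingHom ℝ),
      Polynomial.eval_map, ← Polynomial.eval₂_smulOneHom_eq_smeval]
    congr 1
    exact RingHom.ext_int _ _
  have hk : (k.factorial : ℝ) ≠ 0 := by positivity
  unfold genBinom
  rw [← h2, h, nsmul_eq_mul]
  field_simp

lemma genBinom_vandermonde (a b : ℝ) (k : ℕ) :
    ∑ i ∈ Finset.range (k + 1), genBinom a i * genBinom b (k - i) = genBinom (a + b) k := by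
  simp only [genBinom_eq_choose]
  rw [Ring.add_choose_eq k (Commute.all a b),
    Finset.Nat.sum_antidiagonal_eq_sum_range_succ_mk]

lemma genBinom_mul (z : ℝ) (p q : ℕ) :
    genBinom z (p + q) * ((p + q).choose q : ℝ) = genBinom z p * genBinom (z - p) q := by
  have h : ((p + q).choose q : ℝ) = (p + q).factorial / (p.factorial * q.factorial) := by
    rw [← Nat.choose_symm_add, Nat.cast_add_choose]
  unfold genBinom
  rw [h, Finset.prod_range_add]
  have : ∀ i : ℕ, z - ((p + i : ℕ) : ℝ) = z - p - i := fun i => by push_cast; ring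
  simp only [this]
  have h1 : (p.factorial : ℝ) ≠ 0 := by positivity
  have h2 : (q.factorial : ℝ) ≠ 0 := by positivity
  have h3 : ((p + q).factorial : ℝ) ≠ 0 := by positivity
  field_simp

lemma genBinom_poch (z : ℝ) (m : ℕ) : genBinom (z + m) m = poch (z + 1) m / m.factorial := by
  unfold genBinom poch
  congr 1
  rw [← Finset.prod_range_reflect]
  refine Finset.prod_congr rfl fun i hi => ?_
  have hi := Finset.mem_range.1 hi
  have : ((m - 1 - i : ℕ) : ℝ) = m - 1 - i := by
    rw [Nat.sub_sub, Nat.cast_sub (by omega)]; push_cast; ring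
  rw [this]; ring

lemma poch_add (z : ℝ) (p q : ℕ) : poch z (p + q) = poch z p * poch (z + p) q := by
  unfold poch
  rw [Finset.prod_range_add]
  congr 1
  refine Finset.prod_congr rfl fun i _ => ?_
  push_cast; ring

lemma poch_neg (p q : ℕ) :
    poch (-((p + q : ℕ) : ℝ)) q = (-1) ^ q * (p + q).factorial / p.factorial := by
  have h1 : (p.factorial : ℝ) ≠ 0 := by positivity
  induction q generalizing p with
  | zero => simp [poch, h1]
  | succ q ih =>
    have h := ih (p + 1) (by positivity)
    have e : p + 1 + q = p + (q + 1) := by ring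
    rw [e] at h
    rw [poch_add, h, Nat.factorial_succ p]
    have hp : ((p : ℝ) + 1) ≠ 0 := by positivity
    simp only [poch, Finset.prod_range_one]
    push_cast
    field_simp
    ring

lemma jacobiP_expand (a b : ℝ) (n : ℕ) (x : ℝ) :
    jacobiP a b n x = ∑ k ∈ Finset.range (n + 1),
      (-((1 - x) / 2)) ^ k * (genBinom (n + a) (n - k) * genBinom (k + a + (n + b)) k) := by
  have key : jacobiP a b n x = ∑ i ∈ Finset.range (n + 1), ∑ l ∈ Finset.range (n + 1 - i),
      (-((1 - x) / 2)) ^ (i + l) * (genBinom (n + a) (n - (i + l)) *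
        (genBinom (n + b) i * genBinom (((i + l : ℕ) : ℝ) + a) l)) := by
    unfold jacobiP
    rw [← Finset.sum_range_reflect, Finset.mul_sum]
    refine Finset.sum_congr rfl fun i hi => ?_
    have hi := Finset.mem_range.1 hi
    have e1 : n + 1 - 1 - i = n - i := by omega
    have e2 : n - (n - i) = i := by omega
    rw [e1, e2]
    have hx : (x - 1) = 2 * (-((1 - x) / 2)) := by ring
    have hx' : (x + 1) = 2 * (-((1 - x) / 2) + 1) := by ring
    have h2 : (2 : ℝ)⁻¹ ^ n * 2 ^ i * 2 ^ (n - i) = 1 := by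
      rw [mul_assoc, ← pow_add, show i + (n - i) = n by omega, ← mul_pow]; norm_num
    set y := (1 - x) / 2
    rw [hx, hx', mul_pow, mul_pow, add_pow]
    rw [show n + 1 - i = n - i + 1 by omega]
    calc _ = ((2 : ℝ)⁻¹ ^ n * 2 ^ i * 2 ^ (n - i)) * (genBinom (n + a) (n - i) * genBinom (n + b) i * (-y) ^ i *
        ∑ m ∈ Finset.range (n - i + 1), (-y) ^ m * 1 ^ (n - i - m) * ((n - i).choose m : ℝ)) := by ring
      _ = _ := by
        rw [h2, one_mul, Finset.mul_sum]
        refine Finset.sum_congr rfl fun l hl => ?_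
        have hl := Finset.mem_range.1 hl
        have := genBinom_mul (n + a) (n - (i + l)) l
        rw [show n - (i + l) + l = n - i by omega, Nat.cast_sub (by omega),
          show (n : ℝ) + a - (n - ((i + l : ℕ) : ℝ)) = ((i + l : ℕ) : ℝ) + a by ring] at this
        rw [one_pow, pow_add]
        linear_combination (-y) ^ i * (-y) ^ l * genBinom (n + b) i * this
  rw [key]
  rw [← Finset.sum_range_diag_flip (n + 1) (fun i l => (-((1 - x) / 2)) ^ (i + l) * (genBinom (n + a) (n - (i + l)) *
        (genBinom (n + b) i * genBinom (((i + l : ℕ) : ℝ) + a) l)))]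
  refine Finset.sum_congr rfl fun k _ => ?_
  rw [add_comm ((k : ℝ) + a), ← genBinom_vandermonde (n + b), Finset.mul_sum, Finset.mul_sum]
  refine Finset.sum_congr rfl fun i hi => ?_
  have hi := Finset.mem_range.1 hi
  simp only [show i + (k - i) = k by omega]

/-- Hypergeometric sum. -/
noncomputable def hypF (a c : ℝ) (n : ℕ) (y : ℝ) : ℝ :=
  ∑ j ∈ Finset.range (n + 1),
      poch (-(n : ℝ)) j * poch c j / (poch (a + 1) j * (j.factorial : ℝ)) * y ^ j

lemma jacobiP_hyp (a b : ℝ) (n : ℕ) (x : ℝ) (h : poch (a + 1) n ≠ 0) :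
    jacobiP a b n x = poch (a + 1) n / n.factorial * hypF a (n + a + b + 1) n ((1 - x) / 2) := by
  rw [jacobiP_expand, hypF, Finset.mul_sum]
  refine Finset.sum_congr rfl fun k hk => ?_
  obtain ⟨p, rfl⟩ := Nat.exists_eq_add_of_le' (Nat.lt_succ_iff.1 (Finset.mem_range.1 hk))
  rw [Nat.add_sub_cancel, poch_neg]
  have e1 : (((p + k : ℕ) : ℝ) + a) = (a + k) + p := by push_cast; ring
  have e2 : (k + a + (((p + k : ℕ) : ℝ) + b)) = (((p + k : ℕ) : ℝ) + a + b) + k := by ring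
  rw [e2, genBinom_poch, e1, genBinom_poch]
  rw [add_comm p k, poch_add] at h ⊢
  rw [show a + 1 + (k : ℝ) = a + k + 1 by ring] at h ⊢
  have h0 := left_ne_zero_of_mul h
  have h1 : (p.factorial : ℝ) ≠ 0 := by positivity
  have h2 : (k.factorial : ℝ) ≠ 0 := by positivity
  have h3 : ((k + p).factorial : ℝ) ≠ 0 := by positivity
  rw [neg_pow]
  field_simp
  try ring_nf

lemma hypF_zero (a c : ℝ) (n : ℕ) : hypF a c n 0 = 1 := by
  unfold hypF
  rw [Finset.sum_range_succ']
  simp [poch]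

lemma jacobiP_one (a b : ℝ) (n : ℕ) (h : poch (a + 1) n ≠ 0) :
    jacobiP a b n 1 = poch (a + 1) n / n.factorial := by
  rw [jacobiP_hyp a b n 1 h]; simp [hypF_zero]

lemma poch_vanish (n j : ℕ) (h : n < j) : poch (-(n : ℝ)) j = 0 := by
  unfold poch
  exact Finset.prod_eq_zero (Finset.mem_range.2 h) (by ring)

lemma hypF_symm (a : ℝ) (f g : ℕ) (h : g ≤ f) (y : ℝ) :
    hypF a (-(g : ℝ)) f y = hypF a (-(f : ℝ)) g y := by
  unfold hypF
  rw [← Finset.sum_subset (Finset.range_mono (Nat.succ_le_succ h))]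
  · refine Finset.sum_congr rfl fun j _ => ?_
    rw [mul_comm (poch (-(f : ℝ)) j)]
  · intro j _ hj
    rw [poch_vanish g j (by simpa using hj)]; simp

lemma poch_ne (α : ℤ) (n : ℕ) (h : (n : ℤ) ≤ -α - 1) : poch ((α : ℝ) + 1) n ≠ 0 := by
  unfold poch
  rw [Finset.prod_ne_zero_iff]
  intro i hi
  have hi := Finset.mem_range.1 hi
  have : α + 1 + (i : ℤ) ≠ 0 := by omega
  exact_mod_cast this

lemma poch_diff (c : ℝ) (n : ℕ) : Differentiable ℝ (fun s : ℝ => poch (c - s) n) := by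
  unfold poch
  fun_prop

lemma hypF_diff (α : ℤ) (c : ℝ) (n : ℕ) (h : (n : ℤ) ≤ -α - 1) (y : ℝ) :
    DifferentiableAt ℝ (fun s : ℝ => hypF ((α : ℝ) - s) (c - s) n y) 0 := by
  unfold hypF
  refine DifferentiableAt.fun_sum fun j hj => ?_
  have hj := Finset.mem_range.1 hj
  have e : ∀ s : ℝ, (α : ℝ) - s + 1 = (α + 1) - s := fun s => by ring
  simp only [e]
  have h1 := (poch_diff c j) 0
  have h2 := (poch_diff (α + 1) j) 0
  refine DifferentiableAt.mul_const (DifferentiableAt.div (h1.const_mul _) (h2.mul_const _) ?_) _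
  have := poch_ne α j (by omega)
  simp only [sub_zero]
  positivity

/-- `P̂_f^{α,β;M}` as a limit of combinations of Jacobi polynomials
(upper range). -/
theorem Phat_upper_as_limit
    (α β : ℤ) (M : ℕ → ℝ)
    (hαβ : α ≤ β) (hβ : β ≤ -1)
    (hM : ∀ i, M i ≠ 0 ∧ M i ≠ 1)
    (f : ℕ) (hf1 : ⌈((-α - β : ℤ) : ℚ) / 2⌉ ≤ (f : ℤ)) (hf2 : (f : ℤ) ≤ -α - 1) (x : ℝ) :
    Filter.Tendsto
      (fun s : ℝ => s⁻¹ *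
        (jacobiP ((α : ℝ) - s) (β : ℝ) f x -
          jacobiP ((α : ℝ) - s) (β : ℝ) f 1 /
              jacobiP ((α : ℝ) - s) (β : ℝ) ((-(f : ℤ) - α - β - 1).toNat) 1 *
            jacobiP ((α : ℝ) - s) (β : ℝ) ((-(f : ℤ) - α - β - 1).toNat) x))
      (nhdsWithin 0
        {s : ℝ | s ≠ 0 ∧ jacobiP ((α : ℝ) - s) (β : ℝ) ((-(f : ℤ) - α - β - 1).toNat) 1 ≠ 0})
      (nhds (Phat α β M f x)) := by
  have hf0 : -α - β ≤ 2 * (f : ℤ) := by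
    have h := Int.ceil_le.1 hf1
    have h' : ((-α - β : ℤ) : ℚ) ≤ ((2 * (f : ℤ) : ℤ) : ℚ) := by
      push_cast at h ⊢; linarith
    exact_mod_cast h'
  obtain ⟨g, hg⟩ : ∃ g : ℕ, (g : ℤ) = -(f : ℤ) - α - β - 1 :=
    ⟨(-(f : ℤ) - α - β - 1).toNat, Int.toNat_of_nonneg (by omega)⟩
  have hgf : g ≤ f := by omega
  have e1 : (-(f : ℤ) - α - β - 1).toNat = g := by omega
  have e2 : (-α - β - (f : ℤ) - 1).toNat = g := by omega
  have e3 : (-α - β - (g : ℤ) - 1).toNat = f := by omega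
  have hgR : (g : ℝ) = -f - α - β - 1 := by exact_mod_cast hg
  rw [e1]
  set y := (1 - x) / 2 with hy
  set K := poch ((α : ℝ) + 1) f / f.factorial with hK
  have pf : ∀ s, phiJ α β f s x = K * hypF (α - s) (f + α + β + 1 - s) f y := by
    intro s
    unfold phiJ hypF
    rw [e2, max_eq_left hgf, max_eq_left (Nat.factorial_le hgf),
      show (f : ℝ) - s + α + β + 1 = f + α + β + 1 - s by ring]
  have pg : ∀ s, phiJ α β g s x = K * hypF (α - s) (g + α + β + 1 - s) g y := by
    intro s
    unfold phiJ hypF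
    rw [e3, max_eq_right hgf, max_eq_right (Nat.factorial_le hgf),
      show (g : ℝ) - s + α + β + 1 = g + α + β + 1 - s by ring]
  have df := hypF_diff α (f + α + β + 1) f hf2 y
  have dg := hypF_diff α (g + α + β + 1) g (by omega) y
  have hP : Phat α β M f x = K *
      (deriv (fun s : ℝ => hypF (α - s) (f + α + β + 1 - s) f y) 0 -
        deriv (fun s : ℝ => hypF (α - s) (g + α + β + 1 - s) g y) 0) := by
    unfold Phat
    rw [if_pos ⟨hf1, hf2⟩, e2]
    simp only [pf, pg]
    rw [deriv_const_mul _ df, deriv_const_mul _ dg]; ring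
  rw [hP]
  have hd := df.hasDerivAt.sub dg.hasDerivAt
  have hs := (hasDerivAt_iff_tendsto_slope.1 hd)
  have hc : ∀ n, Continuous (fun s : ℝ => poch ((α : ℝ) + 1 - s) n) := fun n =>
    (poch_diff _ n).continuous
  have hKs : Filter.Tendsto (fun s : ℝ => poch ((α : ℝ) + 1 - s) f / f.factorial) (nhdsWithin 0 {0}ᶜ)
      (nhds K) := by
    have := ((hc f).div_const (f.factorial : ℝ)).tendsto 0
    simp only [sub_zero] at this
    exact this.mono_left nhdsWithin_le_nhds
  have hsub : {s : ℝ | s ≠ 0 ∧ jacobiP ((α : ℝ) - s) (β : ℝ) g 1 ≠ 0} ⊆ {0}ᶜ := fun s h => h.1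
  refine Filter.Tendsto.congr' ?_ ((hKs.mul hs).mono_left (nhdsWithin_mono _ hsub))
  have hnf : ∀ᶠ s in nhds (0 : ℝ), poch ((α : ℝ) + 1 - s) f ≠ 0 :=
    (hc f).continuousAt.eventually_ne (by simpa using poch_ne α f hf2)
  have hng : ∀ᶠ s in nhds (0 : ℝ), poch ((α : ℝ) + 1 - s) g ≠ 0 :=
    (hc g).continuousAt.eventually_ne (by simpa using poch_ne α g (by omega))
  filter_upwards [nhdsWithin_le_nhds hnf, nhdsWithin_le_nhds hng] with s hsf hsg
  have es : (α : ℝ) + 1 - s = α - s + 1 := by ring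
  rw [es] at hsf hsg ⊢
  rw [jacobiP_one _ _ _ hsf, jacobiP_one _ _ _ hsg, jacobiP_hyp _ _ f x hsf, jacobiP_hyp _ _ g x hsg,
    ← hy, show (f : ℝ) + (α - s) + β + 1 = f + α + β + 1 - s by ring,
    show (g : ℝ) + (α - s) + β + 1 = g + α + β + 1 - s by ring]
  have h0 : hypF (α - 0) (f + α + β + 1 - 0) f y = hypF (α - 0) (g + α + β + 1 - 0) g y := by
    have := hypF_symm (α - 0) f g hgf y
    rwa [show -(g : ℝ) = f + α + β + 1 - 0 by rw [hgR]; ring,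
      show -(f : ℝ) = g + α + β + 1 - 0 by rw [hgR]; ring] at this
  have h3 : (g.factorial : ℝ) ≠ 0 := by positivity
  rw [slope_def_field]
  simp only [Pi.sub_apply, h0]
  generalize hypF (α - s) _ f y = A
  generalize hypF (α - s) _ g y = B
  have hB : poch (α - s + 1) f / (f.factorial : ℝ) / (poch (α - s + 1) g / g.factorial) *
      (poch (α - s + 1) g / g.factorial * B) = poch (α - s + 1) f / (f.factorial : ℝ) * B := by
    field_simp
  rw [hB]
  simp only [sub_self, sub_zero]
  ring
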